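/- The map j_α ∘ ι_α : M → N_upp does not depend on the choice of α ∈ A; denoting it ι_upp, the map ι_upp is an open embedding of M into N_upp. If moreover ι_α has dense image in N_α for every α ∈ A, then ι_upp has dense image in N_upp. -/

import Mathlib

open Topology Filter

/-- The identification relation on the disjoint union `Σ α, N α`:
`(α,p) ∼ (β,q)` iff (`α ≤ β` and `ψ_{αβ}(p) = q`) or (`β ≤ α` and `ψ_{βα}(q) = p`). -/
def simRel {A : Type*} [LinearOrder A] {N : A → Type*}
    (ψ : ∀ α β : A, α ≤ β → N α → N β) :
    (Σ α, N α) → (Σ α, N α) → Prop :=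
  fun x y =>
    (∃ h : x.1 ≤ y.1, ψ x.1 y.1 h x.2 = y.2) ∨
    (∃ h : y.1 ≤ x.1, ψ y.1 x.1 h y.2 = x.2)

/-- The map `j_α ∘ ι_α : M → N_upp` does not depend on `α`; it is an open embedding, and it
has dense image provided every `ι_α` has dense image. -/
theorem iotaUpp_isOpenEmbedding
    {M : Type*} [TopologicalSpace M]
    {A : Type*} [LinearOrder A] [Nonempty A]
    {N : A → Type*} [∀ α, TopologicalSpace (N α)]
    (ι : ∀ α, M → N α) (hι : ∀ α, IsOpenEmbedding (ι α))
    (ψ : ∀ α β : A, α ≤ β → N α → N β)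
    (hψ : ∀ (α β : A) (h : α ≤ β), IsOpenEmbedding (ψ α β h))
    (hψι : ∀ (α β : A) (h : α ≤ β), (ψ α β h) ∘ (ι α) = ι β)
    (hψid : ∀ (α : A) (h : α ≤ α), ψ α α h = id)
    (hψcomp : ∀ (α β γ : A) (h₁ : α ≤ β) (h₂ : β ≤ γ),
      (ψ β γ h₂) ∘ (ψ α β h₁) = ψ α γ (h₁.trans h₂)) :
    (∀ α β : A, (fun m => Quot.mk (simRel ψ) ⟨α, ι α m⟩) =
        (fun m => Quot.mk (simRel ψ) ⟨β, ι β m⟩)) ∧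
    (∀ α : A, IsOpenEmbedding (fun m => Quot.mk (simRel ψ) ⟨α, ι α m⟩)) ∧
    ((∀ α : A, DenseRange (ι α)) →
      ∀ α : A, DenseRange (fun m => Quot.mk (simRel ψ) ⟨α, ι α m⟩)) := by
  have hind : ∀ α β : A, ∀ m, Quot.mk (simRel ψ) ⟨α, ι α m⟩ = Quot.mk (simRel ψ) ⟨β, ι β m⟩ := by
    intro α β m
    apply Quot.sound
    rcases le_total α β with h | h
    · exact Or.inl ⟨h, congrFun (hψι α β h) m⟩
    · exact Or.inr ⟨h, congrFun (hψι β α h) m⟩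
  have key : ∀ (a b : A) (h : a ≤ b) (p : N a) (m : M), p = ι a m ↔ ψ a b h p = ι b m := by
    intro a b h p m
    rw [← congrFun (hψι a b h) m]
    exact ((hψ a b h).injective.eq_iff).symm
  have hrel : ∀ (m : M) (x y : Σ α, N α), simRel ψ x y →
      (x.2 = ι x.1 m) = (y.2 = ι y.1 m) := by
    rintro m x y (⟨h, e⟩ | ⟨h, e⟩)
    · rw [← e]; exact propext (key _ _ h _ m)
    · rw [← e]; exact propext (key _ _ h _ m).symm
  have hmk : ∀ (α β : A) (q : N β) (m : M),
      Quot.mk (simRel ψ) ⟨α, ι α m⟩ = Quot.mk (simRel ψ) ⟨β, q⟩ ↔ ι β m = q := by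
    intro α β q m
    constructor
    · intro h
      have h2 := congrArg (Quot.lift (fun x : Σ α, N α => x.2 = ι x.1 m) (hrel m)) h
      have h3 : (ι α m = ι α m) = (q = ι β m) := h2
      exact (h3.mp rfl).symm
    · rintro rfl
      exact hind α β m
  refine ⟨fun α β => funext (hind α β), fun α => ?_, fun hd α => ?_⟩
  · apply IsOpenEmbedding.of_continuous_injective_isOpenMap
    · exact continuous_quot_mk.comp (continuous_sigmaMk.comp (hι α).continuous)
    · intro m m' h
      exact (hι α).injective ((hmk α α _ m).1 h)
    · intro U hU
      rw [← isQuotientMap_quot_mk.isOpen_preimage, isOpen_sigma_iff]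
      intro β
      convert (hι β).isOpenMap U hU using 1
      ext q
      exact exists_congr fun m => and_congr_right fun _ => hmk α β q m
  · intro x
    induction x using Quot.ind with
    | mk x =>
      obtain ⟨β, q⟩ := x
      have hc : Continuous (fun p : N β => Quot.mk (simRel ψ) ⟨β, p⟩) :=
        continuous_quot_mk.comp continuous_sigmaMk
      refine map_mem_closure (f := fun p : N β => Quot.mk (simRel ψ) ⟨β, p⟩) hc (hd β q) ?_
      rintro _ ⟨m, rfl⟩
      exact ⟨m, hind α β m⟩
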